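/- (Shattering Lemma.) Let H ≤ G = 𝔽₂ⁿ be a subgroup and g₁, g₂, g₃ ∈ G with g₁+g₂+g₃ = 0. Let A ⊆ G have densities d₁ = |A ∩ (H+g₁)|/|H|, d₂ = |A ∩ (H+g₂)|/|H|, d₃ = |A ∩ (H+g₃)|/|H|, and set ρ = d₂d₃/4. Then either A contains at least (1/8)·d₁d₂d₃·|H|² triangles, or there is a subgroup H' ≤ H such that H' (1/20, 3/4, log_{1+ρ}(2/d₁))-shatters A on at least one of the cosets H+g₂ or H+g₃. -/

import Mathlib

open scoped Classical BigOperators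

noncomputable section

/-- The group `G = 𝔽₂ⁿ`. -/
abbrev G (n : ℕ) : Type := Fin n → ZMod 2

/-- The coset `H + g` (note that `-g = g` in `𝔽₂ⁿ`). -/
def coset {n : ℕ} (H : AddSubgroup (G n)) (g : G n) : Set (G n) := {x | x + g ∈ H}

/-- The entropy function `f(x) = x log x` (with `f 0 = 0`). -/
def ent (x : ℝ) : ℝ := x * Real.log x

/-- The density of `A` on the coset `H + g`. -/
def dens {n : ℕ} (A : Set (G n)) (H : AddSubgroup (G n)) (g : G n) : ℝ :=
  (Nat.card ↥(A ∩ coset H g) : ℝ) / (Nat.card ↥H : ℝ)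

/-- Mean entropy `F_A(G, H)` of partitioning `G` into cosets of `H`. -/
def meanEntG {n : ℕ} (A : Set (G n)) (H : AddSubgroup (G n)) : ℝ :=
  (∑ g : G n, ent (dens A H g)) / (Fintype.card (G n) : ℝ)

/-- Mean entropy `F_A(H + g, H')` of partitioning the coset `H + g` into cosets of `H'`. -/
def meanEntCoset {n : ℕ} (A : Set (G n)) (H H' : AddSubgroup (G n)) (g : G n) : ℝ :=
  (∑ g₁ : ↥H, ent (dens A H' (g + ↑g₁))) / (Nat.card ↥H : ℝ)

/-- The standard bilinear form on `𝔽₂ⁿ`. -/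
def dotp {n : ℕ} (x y : G n) : ZMod 2 := ∑ i, x i * y i

/-- The character value `(-1)^{⟨x, y⟩}`. -/
def chi {n : ℕ} (x y : G n) : ℝ := if dotp x y = 0 then 1 else -1

/-- Fourier coefficient `f̂_H^g(η) = E_{x ∈ H} [f(x + g) · (-1)^{⟨x, η⟩}]`. -/
def fCoeff {n : ℕ} (H : AddSubgroup (G n)) (g : G n) (f : G n → ℝ) (η : G n) : ℝ :=
  (∑ x : ↥H, f (↑x + g) * chi ↑x η) / (Nat.card ↥H : ℝ)

/-- `f` is `ρ`-superregular on `H + g`: every Fourier coefficient at a character that is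
nontrivial on `H` is at most `ρ` times the zeroth coefficient in absolute value. -/
def SuperregularOn {n : ℕ} (H : AddSubgroup (G n)) (g : G n) (ρ : ℝ) (f : G n → ℝ) : Prop :=
  ∀ η : G n, (∃ x ∈ H, dotp x η ≠ 0) →
    |fCoeff H g f η| ≤ ρ * fCoeff H g f 0

/-- `H'` `(α, β, k)`-shatters `A` on `H + g`. -/
def Shatters {n : ℕ} (H' H : AddSubgroup (G n)) (A : Set (G n)) (g : G n)
    (α β k : ℝ) : Prop :=
  (Nat.card ↥H : ℝ) / (Nat.card ↥H' : ℝ) ≤ (2 : ℝ) ^ k ∧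
  α ≤ (Nat.card {g' : ↥H //
        (Nat.card ↥(A ∩ coset H' (g + ↑g')) : ℝ) ≤ β * dens A H g * (Nat.card ↥H' : ℝ)} : ℝ) /
      (Nat.card ↥H : ℝ)

/-- Number of triangles `(a, b, c)`, `a + b + c = 0`, with `a ∈ S₁`, `b ∈ S₂`, `c ∈ S₃`. -/
def triBetween {n : ℕ} (S₁ S₂ S₃ : Set (G n)) : ℕ :=
  Nat.card {p : G n × G n × G n // p.1 ∈ S₁ ∧ p.2.1 ∈ S₂ ∧ p.2.2 ∈ S₃ ∧ p.1 + p.2.1 + p.2.2 = 0}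

/-- Number of triangles in `A`. -/
def triCount {n : ℕ} (A : Set (G n)) : ℕ := triBetween A A A

/-- The annihilator of `K`: characters trivial on `K`. -/
def ann {n : ℕ} (K : AddSubgroup (G n)) : AddSubgroup (G n) where
  carrier := {η | ∀ x ∈ K, dotp x η = 0}
  zero_mem' := by intro x _; simp [dotp]
  add_mem' := by
    intro a b ha hb x hx
    have h : dotp x (a + b) = dotp x a + dotp x b := by
      simp [dotp, mul_add, Finset.sum_add_distrib]
    rw [h, ha x hx, hb x hx, add_zero]
  neg_mem' := by
    intro a ha x hx
    have h : dotp x (-a) = -dotp x a := by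
      simp [dotp]
    rw [h, ha x hx, neg_zero]

/-- Average of `f` over the coset `v + H'`. -/
def fbar {n : ℕ} (H' : AddSubgroup (G n)) (f : G n → ℝ) (v : G n) : ℝ :=
  (∑ y : ↥H', f (v + ↑y)) / (Nat.card ↥H' : ℝ)

/-- Tower function: `tower 0 = 1`, `tower (i+1) = 2 ^ tower i`. -/
def tower : ℕ → ℕ
  | 0 => 1
  | k + 1 => 2 ^ tower k

/-- `A` is `ε`-far from triangle-free: at least `ε N` elements must be removed from `A`
to destroy all triangles. -/
def FarFromTriangleFree {n : ℕ} (A : Set (G n)) (ε : ℝ) : Prop :=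
  ∀ B ⊆ A, (∀ x ∈ B, ∀ y ∈ B, ∀ z ∈ B, x + y + z ≠ 0) →
    ε * 2 ^ n ≤ (Nat.card ↥(A \ B) : ℝ)

/-- The set of elements of a triangle. -/
def elems {n : ℕ} (p : G n × G n × G n) : Set (G n) := {p.1, p.2.1, p.2.2}

/-!
When a subgroup `H'` of small index shatters neither coset, `A` is not much sparser than average
on most translates of `H'` inside `H + g₂` and `H + g₃`. Let `U` be the set of those `x` in
`H + g₁` that lie in too few triangles whose other vertices are in `A`. If `U` had density at least
`δ = d₁ / 2` on `H + g₁`, a density increment, halving the subgroup at each step, would produce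
`H' ≤ H` of index at most `2 ^ log_{1+ρ}(1/δ)` and a coset of `H'` on which `U` is nonempty and
superregular. Superregularity counts triangles between `U` and any two cosets of `H'` on which `A`
is dense, and averaging over the pairs of cosets shows that `U` has elements in many triangles,
which is absurd. So at least half of the elements of `A` in `H + g₁` lie in many triangles.
-/

section Expect

variable {ι : Type*} [Fintype ι]

lemma exists_pos_and_le_of_mul_expect_le {w a : ι → ℝ} {c : ℝ} (hw : ∀ i, 0 ≤ w i)
    (hpos : 0 < 𝔼 i, w i) (h : c * 𝔼 i, w i ≤ 𝔼 i, w i * a i) : ∃ i, 0 < w i ∧ c ≤ a i := by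
  by_contra! hlt
  obtain ⟨i, hi⟩ : ∃ i, 0 < w i := by
    by_contra! hnonpos
    exact hpos.ne' (Finset.expect_eq_zero fun i _ ↦ (hnonpos i).antisymm (hw i))
  rw [Finset.mul_expect] at h
  refine h.not_gt (Finset.expect_lt_expect (fun j _ ↦ ?_) ⟨i, Finset.mem_univ i, ?_⟩)
  · rcases (hw j).eq_or_lt with hj | hj
    · simp [← hj]
    · nlinarith [hlt j hj]
  · nlinarith [hlt i hi]

lemma one_sub_add_mul_le_expect [Nonempty ι] {F : ι → ℝ} {p q : ι → Prop} {a b c : ℝ}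
    (hF : ∀ i, 0 ≤ F i) (hc : 0 ≤ c) (hp : (𝔼 i, if p i then (1 : ℝ) else 0) ≤ a)
    (hq : (𝔼 i, if q i then (1 : ℝ) else 0) ≤ b) (h : ∀ i, ¬ p i → ¬ q i → c ≤ F i) :
    (1 - (a + b)) * c ≤ 𝔼 i, F i :=
  calc (1 - (a + b)) * c
      ≤ (1 - (𝔼 i, if p i then (1 : ℝ) else 0) - 𝔼 i, if q i then (1 : ℝ) else 0) * c := by
        refine mul_le_mul_of_nonneg_right ?_ hc
        linarith
    _ = 𝔼 i, (1 - (if p i then (1 : ℝ) else 0) - if q i then (1 : ℝ) else 0) * c := by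
        rw [← Finset.expect_mul, Finset.expect_sub_distrib, Finset.expect_sub_distrib,
          Fintype.expect_one]
    _ ≤ 𝔼 i, F i := Finset.expect_le_expect fun i _ ↦ by
        have := hF i
        by_cases hpi : p i <;> by_cases hqi : q i <;> simp only [hpi, hqi, if_true, if_false]
        · linarith
        · linarith
        · linarith
        · simpa using h i hpi hqi

lemma expect_boole_eq_card_div_card (p : ι → Prop) [DecidablePred p] :
    (𝔼 i, if p i then (1 : ℝ) else 0) = Nat.card {i // p i} / Nat.card ι := by
  rw [Fintype.expect_eq_sum_div_card, Finset.sum_boole, Nat.card_eq_fintype_card,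
    Nat.card_eq_fintype_card, Fintype.card_subtype]

end Expect

variable {n : ℕ}

section Characters

lemma dotp_add_left (x y η : G n) : dotp (x + y) η = dotp x η + dotp y η :=
  add_dotProduct x y η

lemma dotp_comm (x y : G n) : dotp x y = dotp y x :=
  dotProduct_comm x y

lemma chi_comm (x y : G n) : chi x y = chi y x := by
  rw [chi, chi, dotp_comm]

lemma chi_eq_one_iff {x η : G n} : chi x η = 1 ↔ dotp x η = 0 := by
  unfold chi
  split_ifs with h <;> norm_num [h]

lemma abs_chi (x η : G n) : |chi x η| = 1 := by
  unfold chi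
  split_ifs <;> simp

lemma chi_add_left (x y η : G n) : chi (x + y) η = chi x η * chi y η := by
  unfold chi
  rw [dotp_add_left]
  generalize dotp x η = a, dotp y η = b
  have hab : a + b = 0 ↔ (a = 0 ↔ b = 0) := by decide +revert
  by_cases ha : a = 0 <;> by_cases hb : b = 0 <;> simp [hab, ha, hb]

/-- The character `x ↦ (-1)^{⟨x, η⟩}`, bundled so that the orthogonality relations for additive
characters apply to it. -/
def chiChar (η : G n) : AddChar (G n) ℝ where
  toFun x := chi x η
  map_zero_eq_one' := chi_eq_one_iff.2 (zero_dotProduct η)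
  map_add_eq_mul' x y := chi_add_left x y η

lemma notMem_ann {H : AddSubgroup (G n)} {η : G n} : η ∉ ann H ↔ ∃ x ∈ H, dotp x η ≠ 0 := by
  change (¬ ∀ x ∈ H, dotp x η = 0) ↔ _
  push Not
  rfl

lemma expect_chi (H : AddSubgroup (G n)) (η : G n) :
    𝔼 x : H, chi ↑x η = if η ∈ ann H then 1 else 0 := by
  have htriv : (chiChar η).compAddMonoidHom H.subtype = 0 ↔ η ∈ ann H :=
    AddChar.eq_zero_iff.trans
      ⟨fun h x hx ↦ chi_eq_one_iff.1 (h ⟨x, hx⟩), fun h x ↦ chi_eq_one_iff.2 (h x x.2)⟩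
  simp_rw [← htriv]
  exact AddChar.expect_eq_ite ((chiChar η).compAddMonoidHom H.subtype)

lemma expect_chi_right (x : G n) : 𝔼 η, chi x η = if x = 0 then 1 else 0 := by
  have htriv : chiChar x = 0 ↔ x = 0 := by
    rw [AddChar.eq_zero_iff, ← dotProduct_eq_zero_iff]
    exact forall_congr' fun y ↦ chi_eq_one_iff.trans (by rw [dotp_comm]; rfl)
  simp_rw [chi_comm x, ← htriv]
  exact AddChar.expect_eq_ite (chiChar x)

lemma card_mul_expect_mem_ann (H : AddSubgroup (G n)) :
    (Nat.card H : ℝ) * 𝔼 η, (if η ∈ ann H then (1 : ℝ) else 0) = 1 := by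
  simp_rw [← expect_chi]
  rw [Finset.expect_comm]
  simp_rw [expect_chi_right, ZeroMemClass.coe_eq_zero, Nat.card_eq_fintype_card]
  rw [Fintype.card_mul_expect, Finset.sum_ite_eq' Finset.univ (0 : H), if_pos (Finset.mem_univ _)]

end Characters

section Averages

variable {H H' : AddSubgroup (G n)}

lemma fbar_eq_expect (H : AddSubgroup (G n)) (f : G n → ℝ) (v : G n) :
    fbar H f v = 𝔼 y : H, f (v + y) := by
  rw [fbar, Fintype.expect_eq_sum_div_card, Nat.card_eq_fintype_card]

lemma fCoeff_eq_expect (H : AddSubgroup (G n)) (g : G n) (f : G n → ℝ) (η : G n) :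
    fCoeff H g f η = 𝔼 x : H, f (g + x) * chi ↑x η := by
  simp only [fCoeff, Fintype.expect_eq_sum_div_card, Nat.card_eq_fintype_card, add_comm g]

lemma fbar_nonneg {f : G n → ℝ} (hf : 0 ≤ f) (v : G n) : 0 ≤ fbar H f v := by
  rw [fbar_eq_expect]
  exact Finset.expect_nonneg fun y _ ↦ hf _

lemma fCoeff_of_mem_ann {η : G n} (hη : η ∈ ann H) (g : G n) (f : G n → ℝ) :
    fCoeff H g f η = fbar H f g := by
  rw [fCoeff_eq_expect, fbar_eq_expect]
  refine Finset.expect_congr rfl fun x _ ↦ ?_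
  rw [chi_eq_one_iff.2 (hη x x.2), mul_one]

lemma fCoeff_zero (H : AddSubgroup (G n)) (g : G n) (f : G n → ℝ) :
    fCoeff H g f 0 = fbar H f g :=
  fCoeff_of_mem_ann (ann H).zero_mem g f

lemma superregularOn_iff {g : G n} {ρ : ℝ} {f : G n → ℝ} :
    SuperregularOn H g ρ f ↔ ∀ η ∉ ann H, |fCoeff H g f η| ≤ ρ * fbar H f g := by
  simp only [SuperregularOn, notMem_ann, fCoeff_zero]

lemma fbar_add_mem {w : G n} (hw : w ∈ H) (f : G n → ℝ) (v : G n) :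
    fbar H f (v + w) = fbar H f v := by
  simp only [fbar_eq_expect]
  exact Fintype.expect_equiv (Equiv.addLeft (⟨w, hw⟩ : H)) _ _ fun y ↦ by
    simp [add_assoc]

lemma expect_fbar (h : H' ≤ H) (f : G n → ℝ) (v : G n) :
    𝔼 u : H, fbar H' f (v + u) = fbar H f v := by
  simp only [fbar_eq_expect H']
  rw [Finset.expect_comm]
  have hshift (y : H') : 𝔼 u : H, f (v + u + y) = fbar H f v := by
    rw [← fbar_add_mem (h y.2) f v, fbar_eq_expect]
    simp only [add_right_comm]
  simp only [hshift, Fintype.expect_const]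

lemma add_mem_coset_iff {v x : G n} : v + x ∈ coset H v ↔ x ∈ H := by
  rw [coset, Set.mem_ofPred_eq, add_right_comm, ZModModule.add_self, zero_add]

lemma indicator_one_nonneg (A : Set (G n)) : 0 ≤ (A.indicator 1 : G n → ℝ) :=
  Set.indicator_nonneg fun _ _ ↦ zero_le_one

lemma dens_eq_fbar (A : Set (G n)) (H : AddSubgroup (G n)) (v : G n) :
    dens A H v = fbar H (A.indicator 1) v := by
  have hcancel (x : G n) : v + (x + v) = x := by
    rw [add_comm x, ← add_assoc, ZModModule.add_self, zero_add]
  have himage : A ∩ coset H v = (fun y : H ↦ v + y) '' {y | v + y ∈ A} := by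
    ext x
    refine ⟨fun ⟨hA, hx⟩ ↦ ⟨⟨x + v, hx⟩, ?_, ?_⟩, ?_⟩
    · rwa [Set.mem_ofPred_eq, hcancel]
    · exact hcancel x
    · rintro ⟨y, hy, rfl⟩
      exact ⟨hy, add_mem_coset_iff.2 y.2⟩
  rw [dens, himage, Nat.card_image_of_injective fun x y hxy ↦ Subtype.ext (add_left_cancel hxy),
    fbar_eq_expect]
  exact (expect_boole_eq_card_div_card _).symm

end Averages

section Fourier

variable (H : AddSubgroup (G n))

lemma card_mul_expect_fCoeff_mul (f g : G n → ℝ) (v : G n) :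
    (Nat.card H : ℝ) * 𝔼 η, fCoeff H v f η * fCoeff H v g η = fbar H (f * g) v := by
  have hdiag (x y : H) : (x : G n) + y = 0 ↔ x = y := by
    rw [← ZModModule.sub_eq_add, sub_eq_zero, Subtype.coe_inj]
  have hdual (η : G n) : fCoeff H v f η * fCoeff H v g η
      = 𝔼 x : H, 𝔼 y : H, f (v + x) * g (v + y) * chi (x + y : G n) η := by
    simp only [fCoeff_eq_expect, Fintype.expect_mul_expect, chi_add_left, mul_mul_mul_comm]
  calc (Nat.card H : ℝ) * 𝔼 η, fCoeff H v f η * fCoeff H v g η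
      = Nat.card H * 𝔼 x : H, 𝔼 y : H, f (v + x) * g (v + y) * 𝔼 η, chi (x + y : G n) η := by
        simp only [hdual, Finset.mul_expect]
        rw [Finset.expect_comm]
        simp only [Finset.expect_comm (ι := G n)]
    _ = 𝔼 x : H, f (v + x) * 𝔼 y : H, (if x = y then (Nat.card H : ℝ) else 0) * g (v + y) := by
        simp only [expect_chi_right, hdiag, Finset.mul_expect]
        refine Finset.expect_congr rfl fun x _ ↦ Finset.expect_congr rfl fun y _ ↦ ?_
        split_ifs <;> ring
    _ = fbar H (f * g) v := by
        simp only [Nat.card_eq_fintype_card, Finset.expect_boole_mul, fbar_eq_expect, Pi.mul_apply]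

/-- The correlation `𝔼 g(y) h(x + y)` of `g` and `h`, with `y` ranging over the coset `q + H`.
For indicator functions of `B` and `C`, it is the proportion of `y` in `q + H` for which
`(x, y, x + y)` is a triangle with `y ∈ B` and `x + y ∈ C`. -/
def cosetCorr (q : G n) (g h : G n → ℝ) (x : G n) : ℝ :=
  fbar H (fun y ↦ g y * h (x + y)) q

lemma cosetCorr_nonneg {g h : G n → ℝ} (hg : 0 ≤ g) (hh : 0 ≤ h) (q : G n) :
    0 ≤ cosetCorr H q g h :=
  fun x ↦ fbar_nonneg (fun y ↦ mul_nonneg (hg y) (hh (x + y))) q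

lemma fCoeff_cosetCorr (p q : G n) (g h : G n → ℝ) (η : G n) :
    fCoeff H p (cosetCorr H q g h) η = fCoeff H q g η * fCoeff H (p + q) h η := by
  have hshift (y : H) : 𝔼 x : H, h (p + q + (x + y)) * chi (x + y : G n) η
      = fCoeff H (p + q) h η := by
    rw [fCoeff_eq_expect]
    exact Fintype.expect_equiv (Equiv.addRight y) _ _ fun x ↦ rfl
  calc fCoeff H p (cosetCorr H q g h) η
      = 𝔼 y : H, 𝔼 x : H, g (q + y) * h (p + x + (q + y)) * chi (x : G n) η := by
        simp only [fCoeff_eq_expect, cosetCorr, fbar_eq_expect, Finset.expect_mul]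
        exact Finset.expect_comm _ _ _
    _ = 𝔼 y : H, g (q + y) * chi (y : G n) η *
          𝔼 x : H, h (p + q + (x + y)) * chi (x + y : G n) η := by
        simp only [Finset.mul_expect, chi_add_left]
        refine Finset.expect_congr rfl fun y _ ↦ Finset.expect_congr rfl fun x _ ↦ ?_
        have hsq : chi (y : G n) η * chi (y : G n) η = 1 := by
          rw [← abs_mul_abs_self, abs_chi, one_mul]
        rw [add_add_add_comm]
        linear_combination -(g (q + y) * h (p + q + (x + y)) * chi (x : G n) η) * hsq
    _ = fCoeff H q g η * fCoeff H (p + q) h η := by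
        simp only [hshift, ← Finset.expect_mul, fCoeff_eq_expect]

lemma card_mul_expect_abs_fCoeff_mul_le (f g : G n → ℝ) (v w : G n) :
    (Nat.card H : ℝ) * 𝔼 η, |fCoeff H v f η| * |fCoeff H w g η|
      ≤ √(fbar H (f * f) v * fbar H (g * g) w) := by
  have hCS := Finset.expect_mul_sq_le_sq_mul_sq Finset.univ
    (fun η ↦ |fCoeff H v f η|) fun η ↦ |fCoeff H w g η|
  simp only [sq_abs] at hCS
  refine Real.le_sqrt_of_sq_le ?_
  rw [← card_mul_expect_fCoeff_mul, ← card_mul_expect_fCoeff_mul, mul_pow]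
  simp only [← sq]
  calc _ ≤ (Nat.card H : ℝ) ^ 2 *
        ((𝔼 η, fCoeff H v f η ^ 2) * 𝔼 η, fCoeff H w g η ^ 2) := by gcongr
    _ = _ := by ring

variable {H}

lemma SuperregularOn.abs_fbar_mul_cosetCorr_sub_le {p : G n} {ρ : ℝ} {f : G n → ℝ}
    (hf : SuperregularOn H p ρ f) (hnonneg : 0 ≤ ρ * fbar H f p) (q : G n) (g h : G n → ℝ) :
    |fbar H (f * cosetCorr H q g h) p - fbar H f p * (fbar H g q * fbar H h (p + q))|
      ≤ ρ * fbar H f p * √(fbar H (g * g) q * fbar H (h * h) (p + q)) := by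
  set F : G n → ℝ := fun η ↦ fCoeff H p f η * (fCoeff H q g η * fCoeff H (p + q) h η)
  set F₀ : ℝ := fbar H f p * (fbar H g q * fbar H h (p + q))
  have hsplit : fbar H (f * cosetCorr H q g h) p - F₀
      = Nat.card H * 𝔼 η, (F η - (if η ∈ ann H then 1 else 0) * F₀) := by
    rw [Finset.expect_sub_distrib, ← Finset.expect_mul, mul_sub, ← mul_assoc,
      card_mul_expect_mem_ann, one_mul, ← card_mul_expect_fCoeff_mul]
    simp only [fCoeff_cosetCorr, F]
  have hterm (η : G n) : |F η - (if η ∈ ann H then 1 else 0) * F₀|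
      ≤ ρ * fbar H f p * (|fCoeff H q g η| * |fCoeff H (p + q) h η|) := by
    split_ifs with hη
    · simp only [F, F₀, fCoeff_of_mem_ann hη, one_mul, sub_self, abs_zero]
      positivity
    · rw [zero_mul, sub_zero, abs_mul, abs_mul]
      gcongr
      exact superregularOn_iff.1 hf η hη
  calc |fbar H (f * cosetCorr H q g h) p - F₀|
      ≤ Nat.card H * 𝔼 η, |F η - (if η ∈ ann H then 1 else 0) * F₀| := by
        rw [hsplit, abs_mul, Nat.abs_cast]
        gcongr
        exact Finset.abs_expect_le _ _
    _ ≤ Nat.card H * 𝔼 η, ρ * fbar H f p * (|fCoeff H q g η| * |fCoeff H (p + q) h η|) := by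
        gcongr with η
        exact hterm η
    _ = ρ * fbar H f p * (Nat.card H * 𝔼 η, |fCoeff H q g η| * |fCoeff H (p + q) h η|) := by
        rw [← Finset.mul_expect, mul_left_comm]
    _ ≤ _ := by
        gcongr
        exact card_mul_expect_abs_fCoeff_mul_le H g h q (p + q)

end Fourier

section Refinement

/-- The hyperplane `{x | ⟨x, η⟩ = 0}` (the whole group if `η = 0`). -/
def perp (η : G n) : AddSubgroup (G n) :=
  (AddMonoidHom.mk' (dotp · η) fun x y ↦ dotp_add_left x y η).ker

lemma mem_perp {x η : G n} : x ∈ perp η ↔ dotp x η = 0 :=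
  Iff.rfl

variable {H : AddSubgroup (G n)}

lemma relIndex_inf_perp {η : G n} (hη : η ∉ ann H) : (H ⊓ perp η).relIndex H = 2 := by
  obtain ⟨x, hx, hxη⟩ := notMem_ann.1 hη
  rw [AddSubgroup.inf_relIndex_left, perp, AddSubgroup.relIndex_ker]
  set K := H.map (AddMonoidHom.mk' (dotp · η) fun x y ↦ dotp_add_left x y η)
  have hK : K ≠ ⊥ := fun h ↦ hxη <| (AddSubgroup.mem_bot).1 <|
    h ▸ AddSubgroup.mem_map_of_mem _ hx
  rw [(eq_bot_or_eq_top K).resolve_left hK, AddSubgroup.card_top, Nat.card_zmod]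

-- The character is constant on the cosets of `H ⊓ perp η`.
lemma fCoeff_eq_expect_fbar_inf_perp (g : G n) (f : G n → ℝ) (η : G n) :
    fCoeff H g f η = 𝔼 w : H, chi ↑w η * fbar (H ⊓ perp η) f (g + w) := by
  have hcoset (w : H) : chi ↑w η * fbar (H ⊓ perp η) f (g + w)
      = fbar (H ⊓ perp η) (fun z ↦ f z * chi (z - g) η) (g + w) := by
    simp only [fbar_eq_expect, Finset.mul_expect]
    refine Finset.expect_congr rfl fun y _ ↦ ?_
    rw [add_assoc g, add_sub_cancel_left, chi_add_left, chi_eq_one_iff.2 (mem_perp.1 y.2.2)]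
    ring
  rw [Finset.expect_congr rfl fun w _ ↦ hcoset w, expect_fbar inf_le_left, fCoeff_eq_expect,
    fbar_eq_expect]
  simp only [add_sub_cancel_left]

lemma exists_add_abs_fCoeff_le_fbar {η : G n} (hη : η ∉ ann H) (g : G n) (f : G n → ℝ) :
    ∃ w ∈ H, fbar H f g + |fCoeff H g f η| ≤ fbar (H ⊓ perp η) f (g + w) := by
  obtain ⟨ε, hε, hεf⟩ : ∃ ε : ℝ, |ε| = 1 ∧ ε * fCoeff H g f η = |fCoeff H g f η| := by
    rcases abs_choice (fCoeff H g f η) with h | h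
    · exact ⟨1, abs_one, by rw [h, one_mul]⟩
    · exact ⟨-1, by simp, by rw [h, neg_one_mul]⟩
  have hmean : 𝔼 w : H, (1 + ε * chi ↑w η) = 1 := by
    rw [Finset.expect_add_distrib, Fintype.expect_one, ← Finset.mul_expect, expect_chi, if_neg hη,
      mul_zero, add_zero]
  have hweight (w : H) : 0 ≤ 1 + ε * chi ↑w η := by
    have := neg_abs_le (ε * chi (w : G n) η)
    rw [abs_mul, hε, abs_chi] at this
    linarith
  obtain ⟨w, -, hw⟩ := exists_pos_and_le_of_mul_expect_le
    (a := fun w : H ↦ fbar (H ⊓ perp η) f (g + w)) (c := fbar H f g + |fCoeff H g f η|)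
    hweight (by rw [hmean]; exact one_pos) (by
      rw [hmean, mul_one, ← hεf, fCoeff_eq_expect_fbar_inf_perp,
        ← expect_fbar (inf_le_left : H ⊓ perp η ≤ H), Finset.mul_expect,
        ← Finset.expect_add_distrib]
      simp only [add_mul, one_mul, mul_assoc, le_refl])
  exact ⟨w, w.2, hw⟩

theorem exists_superregularOn {ρ : ℝ} (hρ : 0 ≤ ρ) (f : G n → ℝ) (H : AddSubgroup (G n))
    (g : G n) :
    ∃ H' ≤ H, ∃ w ∈ H, ∃ m : ℕ, H'.relIndex H = 2 ^ m ∧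
      (1 + ρ) ^ m * fbar H f g ≤ fbar H' f (g + w) ∧ SuperregularOn H' (g + w) ρ f := by
  induction H using WellFoundedLT.induction generalizing g with | _ H ih
  by_cases hreg : SuperregularOn H g ρ f
  · exact ⟨H, le_rfl, 0, H.zero_mem, 0, by simp, by simp, by rwa [add_zero]⟩
  rw [superregularOn_iff] at hreg
  push Not at hreg
  obtain ⟨η, hη, hlarge⟩ := hreg
  set K := H ⊓ perp η
  have hindex : K.relIndex H = 2 := relIndex_inf_perp hη
  have hKH : K < H := inf_lt_left.2 fun h ↦ hη fun _ hx ↦ h hx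
  obtain ⟨w, hw, hincr⟩ := exists_add_abs_fCoeff_le_fbar hη g f
  obtain ⟨H', hH', w', hw', m, hm, hdens, hreg'⟩ := ih K hKH (g + w)
  rw [add_assoc] at hdens hreg'
  refine ⟨H', hH'.trans hKH.le, w + w', H.add_mem hw (hKH.le hw'), m + 1, ?_, ?_, hreg'⟩
  · rw [← AddSubgroup.relIndex_mul_relIndex H' K H hH' hKH.le, hm, hindex, pow_succ]
  · calc (1 + ρ) ^ (m + 1) * fbar H f g = (1 + ρ) ^ m * (fbar H f g + ρ * fbar H f g) := by ring
      _ ≤ (1 + ρ) ^ m * fbar K f (g + w) := by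
          gcongr
          linarith
      _ ≤ fbar H' f (g + (w + w')) := hdens

end Refinement

section Shattering

variable {H H' : AddSubgroup (G n)}

lemma dens_nonneg (A : Set (G n)) (H : AddSubgroup (G n)) (v : G n) : 0 ≤ dens A H v := by
  unfold dens
  positivity

lemma dens_le_one (A : Set (G n)) (H : AddSubgroup (G n)) (v : G n) : dens A H v ≤ 1 := by
  rw [dens_eq_fbar, fbar_eq_expect]
  exact Finset.expect_le Finset.univ_nonempty fun y _ ↦
    Set.indicator_le_self' (fun _ _ ↦ zero_le_one) _

lemma shatters_iff (h : H' ≤ H) (A : Set (G n)) (g : G n) (α β k : ℝ) :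
    Shatters H' H A g α β k ↔ (H'.relIndex H : ℝ) ≤ 2 ^ k ∧
      α ≤ 𝔼 u : H, if dens A H' (g + u) ≤ β * dens A H g then (1 : ℝ) else 0 := by
  have hcard : (Nat.card H : ℝ) = Nat.card H' * H'.relIndex H := by
    rw [← AddSubgroup.relIndex_bot_left, ← AddSubgroup.relIndex_bot_left,
      ← AddSubgroup.relIndex_mul_relIndex ⊥ H' H bot_le h, Nat.cast_mul]
  have hpos : (0 : ℝ) < Nat.card H' := by exact_mod_cast Nat.card_pos
  have hdens (u : H) : dens A H' (g + u) ≤ β * dens A H g ↔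
      (Nat.card ↥(A ∩ coset H' (g + u)) : ℝ) ≤ β * dens A H g * Nat.card H' :=
    div_le_iff₀ hpos
  simp only [hdens, expect_boole_eq_card_div_card, Shatters]
  rw [hcard, mul_div_cancel_left₀ _ hpos.ne']

lemma expect_le_of_not_shatters (h : H' ≤ H) {A : Set (G n)} {g : G n} {α β k : ℝ}
    (hk : (H'.relIndex H : ℝ) ≤ 2 ^ k) (hA : ¬ Shatters H' H A g α β k) :
    (𝔼 u : H, if dens A H' (g + u) ≤ β * dens A H g then (1 : ℝ) else 0) ≤ α :=
  (not_le.1 fun hα ↦ hA ((shatters_iff h A g α β k).2 ⟨hk, hα⟩)).le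

lemma SuperregularOn.mul_le_fbar_mul_cosetCorr {p : G n} {ρ s : ℝ} {f : G n → ℝ}
    (hf : SuperregularOn H p ρ f) (hfp : 0 ≤ fbar H f p) (hρ : 0 ≤ ρ) (hs : ρ ≤ s) {q : G n}
    {A B : Set (G n)} (hAB : s ^ 2 ≤ dens A H q * dens B H (p + q)) :
    fbar H f p * (s * (s - ρ)) ≤ fbar H (f * cosetCorr H q (A.indicator 1) (B.indicator 1)) p := by
  have hcount := hf.abs_fbar_mul_cosetCorr_sub_le (mul_nonneg hρ hfp) q
    (A.indicator 1) (B.indicator 1)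
  simp only [← Set.inter_indicator_one, Set.inter_self, ← dens_eq_fbar] at hcount
  set S := dens A H q * dens B H (p + q)
  have hS : √S * √S = S := Real.mul_self_sqrt ((sq_nonneg s).trans hAB)
  have hsS : s ≤ √S := Real.le_sqrt_of_sq_le hAB
  calc fbar H f p * (s * (s - ρ)) ≤ fbar H f p * (√S * (√S - ρ)) := by gcongr
    _ = fbar H f p * S - ρ * fbar H f p * √S := by linear_combination fbar H f p * hS
    _ ≤ fbar H (f * cosetCorr H q (A.indicator 1) (B.indicator 1)) p := by
        linarith [(abs_le.1 hcount).1]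

lemma SuperregularOn.mul_le_fbar_mul_cosetCorr_of_le (h : H' ≤ H) {p : G n} {ρ s : ℝ}
    {f : G n → ℝ} (hreg : SuperregularOn H' p ρ f) (hf : 0 ≤ f) (hρ : 0 ≤ ρ) (hs : ρ ≤ s)
    {q : G n} {A B : Set (G n)} {a b t₁ t₂ : ℝ} (ht₂ : 0 ≤ t₂)
    (ht : s ^ 2 ≤ t₁ * t₂)
    (hA : (𝔼 u : H, if dens A H' (q + u) ≤ t₁ then (1 : ℝ) else 0) ≤ a)
    (hB : (𝔼 u : H, if dens B H' (p + (q + u)) ≤ t₂ then (1 : ℝ) else 0) ≤ b) :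
    (1 - (a + b)) * (fbar H' f p * (s * (s - ρ)))
      ≤ fbar H' (f * cosetCorr H q (A.indicator 1) (B.indicator 1)) p := by
  have hfp : 0 ≤ fbar H' f p := fbar_nonneg hf p
  have haverage : fbar H' (f * cosetCorr H q (A.indicator 1) (B.indicator 1)) p
      = 𝔼 u : H, fbar H' (f * cosetCorr H' (q + u) (A.indicator 1) (B.indicator 1)) p := by
    simp only [fbar_eq_expect H' _ p, Pi.mul_apply]
    rw [Finset.expect_comm]
    simp only [← Finset.mul_expect, cosetCorr, expect_fbar h]
  have hcorr (v : G n) : 0 ≤ cosetCorr H' v (A.indicator 1) (B.indicator 1) :=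
    cosetCorr_nonneg H' (indicator_one_nonneg A) (indicator_one_nonneg B) v
  rw [haverage]
  refine one_sub_add_mul_le_expect (fun u ↦ fbar_nonneg (mul_nonneg hf (hcorr _)) p)
    (mul_nonneg hfp (mul_nonneg (hρ.trans hs) (sub_nonneg.2 hs))) hA hB fun u hAu hBu ↦ ?_
  refine hreg.mul_le_fbar_mul_cosetCorr hfp hρ hs (ht.trans ?_)
  exact mul_le_mul (not_le.1 hAu).le (not_le.1 hBu).le ht₂ (dens_nonneg A H' _)

lemma exists_superregularOn_indicator {δ ρ : ℝ} (hδ : 0 < δ) (hρ : 0 < ρ) {U : Set (G n)}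
    {g : G n} (hU : δ ≤ dens U H g) :
    ∃ H' ≤ H, ∃ w ∈ H, (H'.relIndex H : ℝ) ≤ 2 ^ Real.logb (1 + ρ) (1 / δ) ∧
      0 < dens U H' (g + w) ∧ SuperregularOn H' (g + w) ρ (U.indicator 1) := by
  obtain ⟨H', hH', w, hw, m, hindex, hdens, hreg⟩ :=
    exists_superregularOn hρ.le (U.indicator 1) H g
  rw [← dens_eq_fbar, ← dens_eq_fbar] at hdens
  have hgrowth : (1 + ρ) ^ m * δ ≤ dens U H' (g + w) := le_trans (by gcongr) hdens
  refine ⟨H', hH', w, hw, ?_, lt_of_lt_of_le (by positivity) hgrowth, hreg⟩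
  rw [hindex, Nat.cast_pow, Nat.cast_ofNat, ← Real.rpow_natCast]
  refine Real.rpow_le_rpow_of_exponent_le one_le_two ?_
  rw [Real.le_logb_iff_rpow_le (by linarith) (by positivity), Real.rpow_natCast, le_div_iff₀ hδ]
  exact hgrowth.trans (dens_le_one U H' _)

theorem dens_setOf_cosetCorr_lt_of_not_shatters {g₁ g₂ : G n} {A B : Set (G n)} {α β δ ρ s : ℝ}
    (hδ : 0 < δ) (hρ : 0 < ρ) (hs : ρ ≤ s) (hβ : 0 ≤ β)
    (hAB : s ^ 2 ≤ β * dens A H g₂ * (β * dens B H (g₁ + g₂)))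
    (hA : ∀ H' ≤ H, ¬ Shatters H' H A g₂ α β (Real.logb (1 + ρ) (1 / δ)))
    (hB : ∀ H' ≤ H, ¬ Shatters H' H B (g₁ + g₂) α β (Real.logb (1 + ρ) (1 / δ))) :
    dens {x | cosetCorr H g₂ (A.indicator 1) (B.indicator 1) x < (1 - 2 * α) * (s * (s - ρ))}
      H g₁ < δ := by
  set U := {x | cosetCorr H g₂ (A.indicator 1) (B.indicator 1) x < (1 - 2 * α) * (s * (s - ρ))}
  by_contra! hU
  obtain ⟨H', hH', w, hw, hindex, hpos, hreg⟩ := exists_superregularOn_indicator hδ hρ hU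
  have hsparseA := expect_le_of_not_shatters hH' hindex (hA H' hH')
  have hsparseB : (𝔼 u : H, if dens B H' (g₁ + w + (g₂ + u)) ≤ β * dens B H (g₁ + g₂)
      then (1 : ℝ) else 0) ≤ α := by
    refine le_of_eq_of_le ?_ (expect_le_of_not_shatters hH' hindex (hB H' hH'))
    exact Fintype.expect_equiv (Equiv.addLeft (⟨w, hw⟩ : H)) _ _ fun u ↦ by
      rw [add_add_add_comm]
      rfl
  have hcorr := hreg.mul_le_fbar_mul_cosetCorr_of_le hH'
    (indicator_one_nonneg U) hρ.le hs (mul_nonneg hβ (dens_nonneg B H _)) hAB hsparseA hsparseB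
  rw [← two_mul, mul_left_comm, mul_comm (fbar _ _ _)] at hcorr
  rw [dens_eq_fbar, fbar_eq_expect] at hpos
  simp only [fbar_eq_expect H' _ (g₁ + w), Pi.mul_apply] at hcorr
  obtain ⟨y, hyU, hy⟩ := exists_pos_and_le_of_mul_expect_le
    (fun y ↦ indicator_one_nonneg U _) hpos hcorr
  have hmem : g₁ + w + (y : G n) ∈ U := Set.mem_of_indicator_ne_zero hyU.ne'
  exact hy.not_gt hmem

end Shattering

section Triangles

variable (H : AddSubgroup (G n))

lemma card_sq_mul_fbar_mul_cosetCorr (p q : G n) (A B C : Set (G n)) :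
    (Nat.card H : ℝ) ^ 2 *
        fbar H (A.indicator 1 * cosetCorr H q (B.indicator 1) (C.indicator 1)) p
      = Nat.card {u : H × H // p + u.1 ∈ A ∧ q + u.2 ∈ B ∧ p + u.1 + (q + u.2) ∈ C} := by
  set T : H × H → Prop := fun u ↦ p + u.1 ∈ A ∧ q + u.2 ∈ B ∧ p + u.1 + (q + u.2) ∈ C
  have hT (x y : H) : (A.indicator 1 (p + x : G n) : ℝ) *
      (B.indicator 1 (q + y : G n) * C.indicator 1 (p + x + (q + y))) =
      if T (x, y) then 1 else 0 := by
    simp only [Set.indicator_apply, Pi.one_apply, T]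
    split_ifs <;> simp_all
  have hpair : (𝔼 x : H, 𝔼 y : H, if T (x, y) then (1 : ℝ) else 0)
      = Nat.card {u // T u} / (Nat.card H : ℝ) ^ 2 := by
    rw [sq, ← Nat.cast_mul, ← Nat.card_prod, ← expect_boole_eq_card_div_card T,
      ← Finset.univ_product_univ, Finset.expect_product]
  have hcard : (Nat.card H : ℝ) ^ 2 ≠ 0 := pow_ne_zero 2 (by exact_mod_cast Nat.card_pos.ne')
  rw [← mul_div_cancel₀ (Nat.card {u // T u} : ℝ) hcard, ← hpair]
  simp only [fbar_eq_expect, cosetCorr, Pi.mul_apply, ← hT, ← Finset.mul_expect]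

lemma card_sq_mul_fbar_le_triBetween (p q : G n) (A B C : Set (G n)) :
    (Nat.card H : ℝ) ^ 2 *
        fbar H (A.indicator 1 * cosetCorr H q (B.indicator 1) (C.indicator 1)) p
      ≤ triBetween A B C := by
  rw [card_sq_mul_fbar_mul_cosetCorr, Nat.cast_le]
  refine Nat.card_le_card_of_injective
    (fun u ↦ ⟨(p + u.1.1, q + u.1.2, p + u.1.1 + (q + u.1.2)), u.2.1, u.2.2.1, u.2.2.2,
      ZModModule.add_self _⟩) fun u v huv ↦ ?_
  simp only [Subtype.mk.injEq, Prod.mk.injEq, add_right_inj, Subtype.coe_inj] at huv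
  exact Subtype.ext (Prod.ext huv.1 huv.2.1)

lemma mul_dens_sub_dens_le_fbar {c : ℝ} {F : G n → ℝ} (hF : 0 ≤ F) (A : Set (G n)) (p : G n) :
    c * (dens A H p - dens {x | F x < c} H p) ≤ fbar H (A.indicator 1 * F) p := by
  simp only [dens_eq_fbar, fbar_eq_expect, ← Finset.expect_sub_distrib, Finset.mul_expect]
  refine Finset.expect_le_expect fun y _ ↦ ?_
  have hind : 0 ≤ A.indicator (1 : G n → ℝ) (p + y) := indicator_one_nonneg A _
  have hind' : A.indicator (1 : G n → ℝ) (p + y) ≤ 1 :=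
    Set.indicator_le_self' (fun _ _ ↦ zero_le_one) _
  have hFy : 0 ≤ F (p + y) := hF _
  rcases lt_or_ge (F (p + y)) c with hlt | hge
  · rw [Set.indicator_of_mem (show p + (y : G n) ∈ {x | F x < c} from hlt), Pi.mul_apply]
    exact (mul_nonpos_of_nonneg_of_nonpos (hFy.trans hlt.le) (sub_nonpos.2 hind')).trans
      (mul_nonneg hind hFy)
  · rw [Set.indicator_of_notMem (show p + (y : G n) ∉ {x | F x < c} from hge.not_gt), sub_zero,
      mul_comm]
    exact mul_le_mul_of_nonneg_left hge hind

variable {H}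

theorem mul_card_sq_le_triBetween_of_not_shatters {g₁ g₂ : G n} {A B C : Set (G n)}
    {α β δ ρ s : ℝ} (hδ : 0 < δ) (hρ : 0 < ρ) (hs : ρ ≤ s) (hα : α ≤ 1 / 2) (hβ : 0 ≤ β)
    (hBC : s ^ 2 ≤ β * dens B H g₂ * (β * dens C H (g₁ + g₂)))
    (hB : ∀ H' ≤ H, ¬ Shatters H' H B g₂ α β (Real.logb (1 + ρ) (1 / δ)))
    (hC : ∀ H' ≤ H, ¬ Shatters H' H C (g₁ + g₂) α β (Real.logb (1 + ρ) (1 / δ))) :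
    (1 - 2 * α) * (s * (s - ρ)) * (dens A H g₁ - δ) * (Nat.card H : ℝ) ^ 2
      ≤ triBetween A B C := by
  have hcorr : 0 ≤ cosetCorr H g₂ (B.indicator 1) (C.indicator 1) :=
    cosetCorr_nonneg H (indicator_one_nonneg B) (indicator_one_nonneg C) g₂
  set F := cosetCorr H g₂ (B.indicator 1) (C.indicator 1)
  set c := (1 - 2 * α) * (s * (s - ρ))
  have hc₀ : 0 ≤ c :=
    mul_nonneg (by linarith) (mul_nonneg (hρ.le.trans hs) (sub_nonneg.2 hs))
  calc c * (dens A H g₁ - δ) * (Nat.card H : ℝ) ^ 2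
      ≤ c * (dens A H g₁ - dens {x | F x < c} H g₁) * (Nat.card H : ℝ) ^ 2 := by
        gcongr
        exact (dens_setOf_cosetCorr_lt_of_not_shatters hδ hρ hs hβ hBC hB hC).le
    _ ≤ fbar H (A.indicator 1 * F) g₁ * (Nat.card H : ℝ) ^ 2 := by
        gcongr
        exact mul_dens_sub_dens_le_fbar H hcorr A g₁
    _ ≤ triBetween A B C := by
        rw [mul_comm]
        exact card_sq_mul_fbar_le_triBetween H g₁ g₂ A B C

end Triangles

lemma three_eighths_mul_le_of_le_sqrt {D : ℝ} (hD₀ : 0 ≤ D) (hD : D ≤ √D) :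
    3 / 8 * D ≤ 3 / 4 * √D * (3 / 4 * √D - D / 4) :=
  calc 3 / 8 * D = 3 / 4 * √D * (3 / 4 * √D - √D / 4) := by
        linear_combination (-3 / 8) * Real.mul_self_sqrt hD₀
    _ ≤ 3 / 4 * √D * (3 / 4 * √D - D / 4) := by gcongr

theorem shattering_lemma {n : ℕ} (H : AddSubgroup (G n)) (g₁ g₂ g₃ : G n)
    (hg : g₁ + g₂ + g₃ = 0) (A : Set (G n)) (d₁ d₂ d₃ ρ : ℝ)
    (hd₁ : d₁ = dens A H g₁) (hd₂ : d₂ = dens A H g₂) (hd₃ : d₃ = dens A H g₃)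
    (hρ : ρ = d₂ * d₃ / 4) :
    (1 / 8 * (d₁ * d₂ * d₃) * (Nat.card ↥H : ℝ) ^ 2 ≤ (triCount A : ℝ)) ∨
    ∃ H' : AddSubgroup (G n), H' ≤ H ∧
      (Shatters H' H A g₂ (1 / 20) (3 / 4) (Real.log (2 / d₁) / Real.log (1 + ρ)) ∨
       Shatters H' H A g₃ (1 / 20) (3 / 4) (Real.log (2 / d₁) / Real.log (1 + ρ))) := by
  obtain rfl : g₃ = g₁ + g₂ := (eq_neg_of_add_eq_zero_right hg).trans (ZModModule.neg_eq_self _)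
  have hd₁₀ : 0 ≤ d₁ := hd₁ ▸ dens_nonneg A H g₁
  have hd₃₀ : 0 ≤ d₃ := hd₃ ▸ dens_nonneg A H _
  have hD₀ : 0 ≤ d₂ * d₃ := mul_nonneg (hd₂ ▸ dens_nonneg A H g₂) hd₃₀
  have hD : d₂ * d₃ ≤ √(d₂ * d₃) := Real.le_sqrt_of_sq_le <| pow_le_of_le_one hD₀
    (mul_le_one₀ (hd₂ ▸ dens_le_one A H _) hd₃₀ (hd₃ ▸ dens_le_one A H _)) two_ne_zero
  rcases (mul_nonneg hd₁₀ hD₀).eq_or_lt with hzero | hpos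
  · exact .inl (by rw [mul_assoc d₁, ← hzero, mul_zero, zero_mul]; exact Nat.cast_nonneg _)
  refine or_iff_not_imp_right.2 fun hno ↦ ?_
  push Not at hno
  rw [Real.log_div_log, ← one_div_div d₁ 2] at hno
  have hs : 3 / 8 * (d₂ * d₃) ≤ 3 / 4 * √(d₂ * d₃) * (3 / 4 * √(d₂ * d₃) - ρ) :=
    hρ ▸ three_eighths_mul_le_of_le_sqrt hD₀ hD
  have hρ₀ : 0 < ρ := hρ ▸ div_pos (pos_of_mul_pos_right hpos hd₁₀) four_pos
  have hsq : (3 / 4 * √(d₂ * d₃)) ^ 2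
      ≤ 3 / 4 * dens A H g₂ * (3 / 4 * dens A H (g₁ + g₂)) := by
    rw [mul_pow, Real.sq_sqrt hD₀, ← hd₂, ← hd₃, mul_mul_mul_comm, sq]
  refine le_trans ?_ (mul_card_sq_le_triBetween_of_not_shatters
    (half_pos (pos_of_mul_pos_left hpos hD₀)) hρ₀ (by linarith) (by norm_num) (by norm_num) hsq
    (fun H' hH' ↦ (hno H' hH').1) fun H' hH' ↦ (hno H' hH').2)
  rw [← hd₁]
  refine mul_le_mul_of_nonneg_right ?_ (sq_nonneg _)
  linarith [mul_le_mul_of_nonneg_right hs hd₁₀]
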